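/- For 0 ≤ k ≤ n−1, Θ(CrossPoly(n,k)) is homotopy equivalent to a wedge of C(n−1, k) copies of the sphere S^{2n−k−2} (where C(n−1,k) is the binomial coefficient). -/

import Mathlib

/-- A hypergraph on vertex type `V` is given by its set `H` of hyperedges
(subsets of `V`).  The theta complex `Θ(𝓗)` has as simplices the nonempty
finite subsets of `V` that are disjoint from at least one hyperedge. -/
def thetaComplex {V : Type*} (H : Set (Set V)) : Set (Finset V) :=
  {σ : Finset V | σ.Nonempty ∧ ∃ h ∈ H, ∀ v ∈ σ, v ∉ h}

/-- The geometric realization of a complex `K` of finite subsets of `V`: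
convex combinations of vertices supported on a simplex of `K`, topologized as a
subspace of `V → ℝ`. -/
def geomReal {V : Type*} (K : Set (Finset V)) : Set (V → ℝ) :=
  {f | (∀ v, 0 ≤ f v) ∧ ∃ σ ∈ K, (∀ v, f v ≠ 0 → v ∈ σ) ∧ ∑ v ∈ σ, f v = 1}

/-- The unit sphere in `ℝ^d`, i.e. the sphere `S^{d-1}` (empty when `d = 0`). -/
def sphereSpace (d : ℕ) : Set (EuclideanSpace ℝ (Fin d)) := Metric.sphere 0 1

/-- A base point on the unit sphere in `ℝ^d`, `d > 0`. -/
noncomputable def spherePt (d : ℕ) (hd : 0 < d) : ↥(sphereSpace d) :=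
  ⟨EuclideanSpace.single (⟨0, hd⟩ : Fin d) 1, by
    simp [sphereSpace, EuclideanSpace.norm_single]⟩

/-- The wedge of copies of a pointed space `(X, x₀)` indexed by `ι`:
the disjoint union with all base points identified. -/
abbrev Wedge (ι : Type*) (X : Type*) [TopologicalSpace X] (x₀ : X) : Type _ :=
  Quot (fun a b : (Σ _ : ι, X) => a.2 = x₀ ∧ b.2 = x₀)

/-- The hypergraph `CrossPoly(n,k)`: vertices are the `2n` vertices
`v_i^± = (i, ±)` of the `n`-dimensional cross-polytope, and hyperedges are the
vertex sets of its `k`-dimensional faces: the `(k+1)`-element subsets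
containing no antipodal pair. -/
def crossEdges (n k : ℕ) : Set (Set (Fin n × Bool)) :=
  {e | ∃ s : Finset (Fin n × Bool), s.card = k + 1 ∧
    (∀ i : Fin n, ¬(((i, true) ∈ s) ∧ ((i, false) ∈ s))) ∧
    e = (↑s : Set (Fin n × Bool))}

section Wedge

open Topology unitInterval

/-- The map from a wedge to the product of its summands. -/
def wedgeToPi {ι X : Type*} [DecidableEq ι] [TopologicalSpace X] (x₀ : X) :
    Wedge ι X x₀ → ι → X :=
  Quot.lift (fun a => Function.update (fun _ => x₀) a.1 a.2) (by
    rintro ⟨i, x⟩ ⟨j, y⟩ ⟨hx, hy⟩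
    dsimp only at hx hy
    subst hx hy
    simp)

theorem wedgeToPi_mk {ι X : Type*} [DecidableEq ι] [TopologicalSpace X] (x₀ : X) (i : ι) (x : X) :
    wedgeToPi x₀ (Quot.mk _ ⟨i, x⟩) = Function.update (fun _ => x₀) i x := rfl

theorem continuous_wedgeToPi {ι X : Type*} [DecidableEq ι] [TopologicalSpace X] (x₀ : X) :
    Continuous (wedgeToPi (ι := ι) x₀) :=
  continuous_quot_lift _ (continuous_sigma fun i => continuous_const.update i continuous_id)

theorem wedgeToPi_injective {ι X : Type*} [DecidableEq ι] [TopologicalSpace X] (x₀ : X) :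
    Function.Injective (wedgeToPi (ι := ι) x₀) := by
  rintro ⟨i, x⟩ ⟨j, y⟩ h
  change Function.update (fun _ => x₀) i x = Function.update (fun _ => x₀) j y at h
  by_cases hij : i = j
  · subst hij
    rw [Function.update_injective _ i h]
  · apply Quot.sound
    have hi := congrFun h i
    have hj := congrFun h j
    rw [Function.update_self, Function.update_of_ne hij] at hi
    rw [Function.update_self, Function.update_of_ne (Ne.symm hij)] at hj
    exact ⟨hi, hj.symm⟩

theorem t2Space_wedge {ι X : Type*} [TopologicalSpace X] [T2Space X] (x₀ : X) :
    T2Space (Wedge ι X x₀) := by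
  classical
  exact T2Space.of_injective_continuous (wedgeToPi_injective x₀) (continuous_wedgeToPi x₀)

/-- A continuous surjection `q` from a compact space collapsing exactly `D` to a point is a
homotopy equivalence as soon as some homotopy starting at the identity contracts `D` in itself. -/
theorem nonempty_homotopyEquiv_of_collapse {X W : Type*} [TopologicalSpace X] [TopologicalSpace W]
    [CompactSpace X] [T2Space W] (q : C(X, W)) (hq : Function.Surjective q) (D : Set X) (w₀ : W)
    (hD : ∀ x ∈ D, q x = w₀) (hinj : ∀ x y, q x = q y → x = y ∨ (x ∈ D ∧ y ∈ D))
    (H : C(I × X, X)) (hH₀ : ∀ x, H (0, x) = x) (hHD : ∀ s, ∀ x ∈ D, H (s, x) ∈ D)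
    (v : X) (hH₁ : ∀ x ∈ D, H (1, x) = v) :
    Nonempty (ContinuousMap.HomotopyEquiv X W) := by
  have hqq : IsQuotientMap q := q.continuous.isClosedMap.isQuotientMap q.continuous hq
  let p : C(I × X, I × W) := (ContinuousMap.id I).prodMap q
  have hp : IsQuotientMap p := by
    refine p.continuous.isClosedMap.isQuotientMap p.continuous ?_
    rintro ⟨s, w⟩
    obtain ⟨x, rfl⟩ := hq w
    exact ⟨(s, x), rfl⟩
  let H₁ : C(X, X) := ⟨fun x => H (1, x), by fun_prop⟩
  have hfac₁ : Function.FactorsThrough H₁ q := by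
    intro x y hxy
    rcases hinj x y hxy with rfl | ⟨hx, hy⟩
    · rfl
    · exact (hH₁ x hx).trans (hH₁ y hy).symm
  have hfac : Function.FactorsThrough (q.comp H) p := by
    rintro ⟨s, x⟩ ⟨t, y⟩ hxy
    obtain ⟨rfl, hxy'⟩ : s = t ∧ q x = q y := Prod.ext_iff.1 hxy
    rcases hinj x y hxy' with rfl | ⟨hx, hy⟩
    · rfl
    · exact (hD _ (hHD s x hx)).trans (hD _ (hHD s y hy)).symm
  let g : C(W, X) := hqq.lift H₁ hfac₁
  have hg : ∀ x, g (q x) = H (1, x) := fun x =>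
    DFunLike.congr_fun (hqq.lift_comp H₁ hfac₁) x
  let L : C(I × W, W) := hp.lift (q.comp H) hfac
  have hL : ∀ s x, L (s, q x) = q (H (s, x)) := fun s x =>
    DFunLike.congr_fun (hp.lift_comp (q.comp H) hfac) (s, x)
  refine ⟨⟨q, g, ⟨ContinuousMap.Homotopy.symm ⟨H, hH₀, fun x => (hg x).symm⟩⟩,
    ⟨ContinuousMap.Homotopy.symm ⟨L, fun w => ?_, fun w => ?_⟩⟩⟩⟩
  · obtain ⟨x, rfl⟩ := hq w
    exact (hL 0 x).trans (congrArg q (hH₀ x))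
  · obtain ⟨x, rfl⟩ := hq w
    exact (hL 1 x).trans (congrArg q (hg x).symm)

/-- Recognition of wedges: a compact space with maps `φ i` to `Y` that are injective away from
the base point, onto, and have disjoint supports is homotopy equivalent to a wedge of copies of
`Y` if the common zero set of the `φ i` is contracted by a homotopy of the whole space. -/
theorem nonempty_homotopyEquiv_wedge {ι X Y : Type*} [TopologicalSpace X] [TopologicalSpace Y]
    [CompactSpace X] [Finite ι] [Nonempty ι] [CompactSpace Y] [T2Space Y] (y₀ : Y)
    (φ : ι → X → Y) (hφ : ∀ i, Continuous (φ i))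
    (hdisj : ∀ x i j, φ i x ≠ y₀ → φ j x ≠ y₀ → i = j)
    (hinj : ∀ i x x', φ i x = φ i x' → φ i x ≠ y₀ → x = x')
    (hsurj : ∀ i y, y ≠ y₀ → ∃ x, φ i x = y)
    (H : C(I × X, X)) (hH₀ : ∀ x, H (0, x) = x)
    (hHD : ∀ s x, (∀ i, φ i x = y₀) → ∀ i, φ i (H (s, x)) = y₀)
    (v : X) (hv : ∀ i, φ i v = y₀) (hH₁ : ∀ x, (∀ i, φ i x = y₀) → H (1, x) = v) :
    Nonempty (ContinuousMap.HomotopyEquiv X (Wedge ι Y y₀)) := by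
  classical
  have := t2Space_wedge (ι := ι) y₀
  obtain ⟨i₀⟩ := ‹Nonempty ι›
  let w₀ : Wedge ι Y y₀ := Quot.mk _ ⟨i₀, y₀⟩
  have hex : ∀ x, ∃ w : Wedge ι Y y₀, wedgeToPi y₀ w = fun i => φ i x := by
    intro x
    by_cases h : ∃ i, φ i x ≠ y₀
    · obtain ⟨i, hi⟩ := h
      refine ⟨Quot.mk _ ⟨i, φ i x⟩, funext fun j => ?_⟩
      rw [wedgeToPi_mk]
      by_cases hij : j = i
      · subst hij
        simp
      · rw [Function.update_of_ne hij]
        by_contra hne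
        exact hij (hdisj x j i (Ne.symm hne) hi)
    · push Not at h
      refine ⟨w₀, funext fun j => ?_⟩
      simp [w₀, wedgeToPi_mk, h]
  choose q hq using hex
  have hemb := (continuous_wedgeToPi (ι := ι) y₀).isClosedEmbedding (wedgeToPi_injective y₀)
  have hqc : Continuous q := by
    rw [hemb.isInducing.continuous_iff]
    exact (continuous_pi hφ).congr fun x => (hq x).symm
  have hqφ : ∀ x x', q x = q x' → ∀ i, φ i x = φ i x' := fun x x' h i => by
    have := congrArg (fun w => wedgeToPi y₀ w i) h
    simpa [hq] using this
  have hφq : ∀ x w, (∀ i, φ i x = wedgeToPi y₀ w i) → q x = w := fun x w h =>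
    wedgeToPi_injective y₀ ((hq x).trans (funext h))
  refine nonempty_homotopyEquiv_of_collapse ⟨q, hqc⟩ ?_ {x | ∀ i, φ i x = y₀} w₀ ?_ ?_ H hH₀
    (fun s x hx => hHD s x hx) v hH₁
  · rintro ⟨i, y⟩
    by_cases hy : y = y₀
    · refine ⟨v, hφq _ _ fun j => ?_⟩
      rw [wedgeToPi_mk, hv, hy]
      simp
    · obtain ⟨x, rfl⟩ := hsurj i y hy
      refine ⟨x, hφq _ _ fun j => ?_⟩
      rw [wedgeToPi_mk]
      by_cases hij : j = i
      · subst hij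
        simp
      · rw [Function.update_of_ne hij]
        by_contra hne
        exact hij (hdisj x j i hne hy)
  · intro x hx
    refine hφq _ _ fun j => ?_
    simp [w₀, wedgeToPi_mk, hx j]
  · intro x y hxy
    have h := hqφ x y hxy
    by_cases hx : ∀ i, φ i x = y₀
    · exact Or.inr ⟨hx, fun i => (h i).symm.trans (hx i)⟩
    · push Not at hx
      obtain ⟨i, hi⟩ := hx
      exact Or.inl (hinj i x y (h i) hi)

/-- A homeomorphism from an open set onto the complement of a point of a compact space extends to
a continuous map sending everything else to that point. -/
theorem exists_continuous_extension {X Y : Type*} [TopologicalSpace X] [T2Space X]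
    [TopologicalSpace Y] [CompactSpace Y] (y₀ : Y) {U : Set X} (hU : IsOpen U)
    (h : U ≃ₜ ({y₀}ᶜ : Set Y)) :
    ∃ φ : X → Y, Continuous φ ∧ (∀ x, φ x = y₀ ↔ x ∉ U) ∧ (∀ x : U, φ x = h x) := by
  classical
  let φ : X → Y := fun x => if hx : x ∈ U then h ⟨x, hx⟩ else y₀
  have hin : ∀ x : U, φ x = h x := fun x => by simp [φ]
  have hout : ∀ x, φ x = y₀ ↔ x ∉ U := fun x => by
    by_cases hx : x ∈ U
    · simpa [hx] using (hin ⟨x, hx⟩).trans_ne (h ⟨x, hx⟩).2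
    · simp [φ, hx]
  refine ⟨φ, continuous_def.2 fun O hO => ?_, hout, hin⟩
  by_cases hy : y₀ ∈ O
  · rw [← isClosed_compl_iff]
    have hset : (φ ⁻¹' O)ᶜ = (fun y => ((h.symm y : U) : X)) '' ((↑) ⁻¹' Oᶜ) := by
      ext x
      constructor
      · intro hx
        have hxU : x ∈ U := by
          by_contra hxU
          exact hx (by simpa [(hout x).2 hxU] using hy)
        exact ⟨h ⟨x, hxU⟩, by simpa [← hin] using hx, by simp⟩
      · rintro ⟨y, hyO, rfl⟩
        simpa [hin] using hyO
    rw [hset]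
    refine (IsCompact.image ?_ (by fun_prop)).isClosed
    rw [Topology.IsInducing.subtypeVal.isCompact_preimage_iff]
    · exact hO.isClosed_compl.isCompact
    · rw [Subtype.range_coe]
      exact fun y hyO hyy => hyO (by rw [Set.mem_singleton_iff.1 hyy]; exact hy)
  · have hset : φ ⁻¹' O = (↑) '' ((fun x : U => (h x : Y)) ⁻¹' O) := by
      ext x
      constructor
      · intro hx
        have hxU : x ∈ U := by
          by_contra hxU
          exact hy (by simpa [(hout x).2 hxU] using hx)
        exact ⟨⟨x, hxU⟩, by simpa [← hin] using hx, rfl⟩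
      · rintro ⟨x, hxO, rfl⟩
        simpa [hin] using hxO
    rw [hset]
    exact hU.isOpenMap_subtype_val _ (hO.preimage (by fun_prop))

/-- The complement of a point in a sphere is a real vector space of the right dimension. -/
theorem nonempty_homeomorph_sphere_compl {E F : Type*} [NormedAddCommGroup E]
    [InnerProductSpace ℝ E] [FiniteDimensional ℝ E] [AddCommGroup F] [Module ℝ F]
    [TopologicalSpace F] [IsTopologicalAddGroup F] [ContinuousSMul ℝ F] [T2Space F]
    [FiniteDimensional ℝ F] (y₀ : Metric.sphere (0 : E) 1)
    (hd : Module.finrank ℝ E = Module.finrank ℝ F + 1) :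
    Nonempty (F ≃ₜ ({y₀}ᶜ : Set (Metric.sphere (0 : E) 1))) := by
  have : Fact (Module.finrank ℝ E = Module.finrank ℝ F + 1) := ⟨hd⟩
  let e := stereographic' (Module.finrank ℝ F) y₀
  have e₁ := e.toHomeomorphSourceTarget
  rw [stereographic'_source, stereographic'_target] at e₁
  have e₂ : F ≃L[ℝ] EuclideanSpace ℝ (Fin (Module.finrank ℝ F)) :=
    ContinuousLinearEquiv.ofFinrankEq (by simp)
  exact ⟨e₂.toHomeomorph.trans ((Homeomorph.Set.univ _).symm.trans e₁.symm)⟩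

end Wedge

section CrossPolytope

open Finset

variable {N m : ℕ}

/-- The indices `i` at which `f` is nonzero at both antipodal vertices. -/
noncomputable def fullPairs (f : Fin (N + 1) × Bool → ℝ) : Finset (Fin (N + 1)) :=
  {i | f (i, true) ≠ 0 ∧ f (i, false) ≠ 0}

theorem mem_fullPairs {f : Fin (N + 1) × Bool → ℝ} {i : Fin (N + 1)} :
    i ∈ fullPairs f ↔ ∀ b, f (i, b) ≠ 0 := by
  simp [fullPairs, and_comm]

/-- Convex combinations of the vertices of the cross-polytope whose support contains at most `m`
antipodal pairs. -/
def crossReal (N m : ℕ) : Set (Fin (N + 1) × Bool → ℝ) :=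
  {f | (∀ x, 0 ≤ f x) ∧ ∑ x, f x = 1 ∧ #(fullPairs f) ≤ m}

theorem geomReal_thetaComplex_crossEdges {k : ℕ} (h : k + m = N) :
    geomReal (thetaComplex (crossEdges (N + 1) k)) = crossReal N m := by
  classical
  ext f
  constructor
  · rintro ⟨hf, σ, ⟨-, _, ⟨s, hs, hanti, rfl⟩, hσ⟩, hsupp, hsum⟩
    have hzero : ∀ x ∈ s, f x = 0 := fun x hx => by
      by_contra hne
      exact hσ x (hsupp x hne) hx
    refine ⟨hf, ?_, ?_⟩
    · rw [← hsum]
      exact (sum_subset (subset_univ σ) fun x _ hx => by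
        by_contra hne
        exact hx (hsupp x hne)).symm
    · have hcard : #(s.image Prod.fst) = k + 1 := by
        rw [card_image_of_injOn, hs]
        rintro ⟨i, a⟩ hi ⟨j, b⟩ hj (rfl : i = j)
        have := hanti i
        simp only [mem_coe] at hi hj
        cases a <;> cases b <;> simp_all
      have hdisj : Disjoint (fullPairs f) (s.image Prod.fst) := by
        rw [disjoint_right]
        intro i hi hi'
        obtain ⟨⟨j, b⟩, hj, rfl⟩ := mem_image.1 hi
        exact mem_fullPairs.1 hi' b (hzero _ hj)
      have := card_le_univ (fullPairs f ∪ s.image Prod.fst)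
      rw [card_union_of_disjoint hdisj, hcard, Fintype.card_fin] at this
      omega
  · rintro ⟨hf, hsum, hcard⟩
    have hcompl : k + 1 ≤ #(fullPairs f)ᶜ := by
      rw [card_compl, Fintype.card_fin]
      omega
    obtain ⟨A, hA, hAcard⟩ := exists_subset_card_eq hcompl
    let c : Fin (N + 1) → Fin (N + 1) × Bool := fun i => (i, decide (f (i, true) = 0))
    have hc : Function.Injective c := fun i j hij => congrArg Prod.fst hij
    have hsumσ : ∑ x with f x ≠ 0, f x = 1 := by
      rw [← hsum]
      exact sum_filter_ne_zero _
    refine ⟨hf, ({x | f x ≠ 0} : Finset _), ⟨?_, _, ⟨A.image c, ?_, ?_, rfl⟩, ?_⟩, by simp, hsumσ⟩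
    · rw [nonempty_iff_ne_empty]
      intro he
      rw [he] at hsumσ
      simp at hsumσ
    · rw [card_image_of_injective _ hc, hAcard]
    · rintro i ⟨hi, hi'⟩
      simp only [mem_image, c, Prod.mk.injEq] at hi hi'
      obtain ⟨j, -, rfl, hj⟩ := hi
      obtain ⟨j', -, rfl, hj'⟩ := hi'
      simp_all
    · intro x hx hxA
      obtain ⟨i, hi, rfl⟩ := mem_image.1 (mem_coe.1 hxA)
      have hi' := mem_compl.1 (hA hi)
      simp only [mem_filter, mem_univ, true_and, c] at hx
      refine hi' (mem_fullPairs.2 fun b => ?_)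
      by_cases h0 : f (i, true) = 0
      · simp [h0] at hx
      · cases b <;> simp_all

theorem isCompact_crossReal (N m : ℕ) : IsCompact (crossReal N m) := by
  have hK : IsCompact (Set.univ.pi fun _ : Fin (N + 1) × Bool => Set.Icc (0 : ℝ) 1) :=
    isCompact_univ_pi fun _ => isCompact_Icc
  refine hK.of_isClosed_subset ?_ ?_
  · have hset : crossReal N m = {f | ∀ x, 0 ≤ f x} ∩ {f | ∑ x, f x = 1} ∩
        ⋃ P ∈ {P : Finset (Fin (N + 1)) | #P ≤ m},
          {f | ∀ i ∉ P, f (i, true) = 0 ∨ f (i, false) = 0} := by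
      ext f
      simp only [crossReal, Set.mem_ofPred_eq, Set.mem_inter_iff, Set.mem_iUnion, exists_prop,
        and_assoc]
      refine and_congr_right fun _ => and_congr_right fun _ => ⟨fun h => ⟨_, h, ?_⟩, ?_⟩
      · intro i hi
        by_contra! hne
        exact hi (by simpa [fullPairs] using hne)
      · rintro ⟨P, hP, hfP⟩
        refine (card_le_card fun i hi => ?_).trans hP
        by_contra hiP
        have := mem_fullPairs.1 hi
        rcases hfP i hiP with h | h
        · exact this _ h
        · exact this _ h
    rw [hset]
    refine IsClosed.inter (IsClosed.inter ?_ ?_) ?_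
    · simp only [Set.ofPred_forall]
      exact isClosed_iInter fun x => isClosed_le (by fun_prop) (by fun_prop)
    · exact isClosed_eq (by fun_prop) (by fun_prop)
    · refine (Set.toFinite _).isClosed_biUnion fun P _ => ?_
      simp only [Set.ofPred_forall]
      exact isClosed_iInter fun i => isClosed_iInter fun _ =>
        (isClosed_eq (by fun_prop) (by fun_prop)).union (isClosed_eq (by fun_prop) (by fun_prop))
  · rintro f ⟨hf, hsum, -⟩ x -
    exact ⟨hf x, hsum ▸ single_le_sum (fun y _ => hf y) (mem_univ x)⟩

/-- Rescaling to total mass one. -/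
noncomputable def unitMass (g : Fin (N + 1) × Bool → ℝ) : Fin (N + 1) × Bool → ℝ :=
  fun x => g x / ∑ y, g y

theorem unitMass_of_sum_eq_one {g : Fin (N + 1) × Bool → ℝ} (h : ∑ x, g x = 1) :
    unitMass g = g := by
  ext x
  simp [unitMass, h]

theorem continuous_unitMass_comp {Z : Type*} [TopologicalSpace Z]
    {g : Z → Fin (N + 1) × Bool → ℝ} (hg : Continuous g) (hsum : ∀ z, ∑ x, g z x ≠ 0) :
    Continuous fun z => unitMass (g z) :=
  continuous_pi fun x => ((continuous_apply x).comp hg).div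
    (continuous_finsetSum _ fun y _ => (continuous_apply y).comp hg) hsum

theorem unitMass_mem_crossReal {g : Fin (N + 1) × Bool → ℝ} (hg : ∀ x, 0 ≤ g x)
    (hsum : 0 < ∑ x, g x) (hcard : #(fullPairs g) ≤ m) : unitMass g ∈ crossReal N m := by
  refine ⟨fun x => div_nonneg (hg x) hsum.le, ?_, ?_⟩
  · simp only [unitMass]
    rw [← sum_div, div_self hsum.ne']
  · refine (card_le_card fun i hi => ?_).trans hcard
    exact mem_fullPairs.2 fun b hb => mem_fullPairs.1 hi b (by simp [unitMass, hb])

/-- The vertex `(0, true)` together with the antipodal pairs indexed by `T`. -/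
def block (T : Finset (Fin N)) : Finset (Fin (N + 1) × Bool) :=
  {x | x = (0, true) ∨ ∃ i ∈ T, x.1 = i.succ}

theorem mem_block {T : Finset (Fin N)} {x : Fin (N + 1) × Bool} :
    x ∈ block T ↔ x = (0, true) ∨ ∃ i ∈ T, x.1 = i.succ := by
  simp [block]

theorem apex_notMem_block (T : Finset (Fin N)) : ((0, false) : Fin (N + 1) × Bool) ∉ block T := by
  simp [mem_block, (Fin.succ_ne_zero _).symm]

theorem block_nonempty (T : Finset (Fin N)) : (block T).Nonempty :=
  ⟨(0, true), mem_block.2 (Or.inl rfl)⟩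

/-- The least value of `f` on the block of `T`. -/
noncomputable def depth (T : Finset (Fin N)) (f : Fin (N + 1) × Bool → ℝ) : ℝ :=
  (block T).inf' (block_nonempty T) f

theorem continuous_depth (T : Finset (Fin N)) : Continuous (depth T) :=
  Continuous.finset_inf'_apply _ fun x _ => continuous_apply x

theorem depth_le {T : Finset (Fin N)} {f : Fin (N + 1) × Bool → ℝ} {x : Fin (N + 1) × Bool}
    (hx : x ∈ block T) : depth T f ≤ f x :=
  inf'_le _ hx

theorem exists_eq_depth (T : Finset (Fin N)) (f : Fin (N + 1) × Bool → ℝ) :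
    ∃ x ∈ block T, depth T f = f x :=
  exists_mem_eq_inf' _ _

theorem depth_pos_iff {T : Finset (Fin N)} {f : Fin (N + 1) × Bool → ℝ} :
    0 < depth T f ↔ 0 < f (0, true) ∧ ∀ i ∈ T, ∀ b, 0 < f (i.succ, b) := by
  simp only [depth, lt_inf'_iff, mem_block]
  constructor
  · exact fun h => ⟨h _ (Or.inl rfl), fun i hi b => h _ (Or.inr ⟨i, hi, rfl⟩)⟩
  · rintro ⟨h₀, h⟩ ⟨j, b⟩ (hx | ⟨i, hi, hx⟩)
    · rw [hx]
      exact h₀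
    · dsimp only at hx
      rw [hx]
      exact h i hi b

theorem depth_nonneg {f : Fin (N + 1) × Bool → ℝ} (hf : ∀ x, 0 ≤ f x) (T : Finset (Fin N)) :
    0 ≤ depth T f := by
  obtain ⟨x, -, hx⟩ := exists_eq_depth T f
  rw [hx]
  exact hf x

theorem fullPairs_eq_of_depth_pos {f : Fin (N + 1) × Bool → ℝ} (hf : f ∈ crossReal N m)
    {T : Finset (Fin N)} (hT : #T = m) (hpos : 0 < depth T f) :
    fullPairs f = T.map (Fin.succEmb N) := by
  refine (eq_of_subset_of_card_le ?_ ?_).symm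
  · intro j hj
    obtain ⟨i, hi, rfl⟩ := mem_map.1 hj
    exact mem_fullPairs.2 fun b => ((depth_pos_iff.1 hpos).2 i hi b).ne'
  · rw [card_map, hT]
    exact hf.2.2

theorem eq_of_depth_pos {f : Fin (N + 1) × Bool → ℝ} (hf : f ∈ crossReal N m)
    {T T' : Finset (Fin N)} (hT : #T = m) (hT' : #T' = m) (hpos : 0 < depth T f)
    (hpos' : 0 < depth T' f) : T = T' :=
  map_injective _ ((fullPairs_eq_of_depth_pos hf hT hpos).symm.trans
    (fullPairs_eq_of_depth_pos hf hT' hpos'))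

theorem apply_apex_eq_zero {f : Fin (N + 1) × Bool → ℝ} (hf : f ∈ crossReal N m)
    {T : Finset (Fin N)} (hT : #T = m) (hpos : 0 < depth T f) : f (0, false) = 0 := by
  by_contra hne
  have h0 : (0 : Fin (N + 1)) ∈ fullPairs f := by
    rw [mem_fullPairs]
    rintro (_ | _)
    · exact hne
    · exact (depth_pos_iff.1 hpos).1.ne'
  rw [fullPairs_eq_of_depth_pos hf hT hpos] at h0
  simp [Fin.succ_ne_zero] at h0

theorem fullPairs_subset_insert {f g : Fin (N + 1) × Bool → ℝ}
    (h : ∀ x, x ≠ (0, false) → f x = 0 → g x = 0) : fullPairs g ⊆ insert 0 (fullPairs f) := by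
  intro i hi
  rw [mem_insert, or_iff_not_imp_left]
  intro hi0
  exact mem_fullPairs.2 fun b hb => mem_fullPairs.1 hi b (h _ (by simp [hi0]) hb)

theorem fullPairs_subset {f g : Fin (N + 1) × Bool → ℝ} (h : ∀ x, f x = 0 → g x = 0) :
    fullPairs g ⊆ fullPairs f := fun _ hi =>
  mem_fullPairs.2 fun b hb => mem_fullPairs.1 hi b (h _ hb)

theorem card_fullPairs_le_of_depth_eq_zero {f g : Fin (N + 1) × Bool → ℝ}
    (hf : f ∈ crossReal N m) (hD : ∀ T : Finset (Fin N), #T = m → depth T f = 0)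
    (h : ∀ x, x ≠ (0, false) → f x = 0 → g x = 0) : #(fullPairs g) ≤ m := by
  have hsub := fullPairs_subset_insert h
  by_cases h0 : 0 ∈ fullPairs f
  · rw [insert_eq_of_mem h0] at hsub
    exact (card_le_card hsub).trans hf.2.2
  rcases hf.2.2.lt_or_eq with hlt | heq
  · exact (card_le_card hsub).trans ((card_insert_le _ _).trans hlt)
  have hmap : ({i | i.succ ∈ fullPairs f} : Finset (Fin N)).map (Fin.succEmb N) = fullPairs f := by
    ext j
    refine Fin.cases ?_ (fun i => ?_) j
    · simp [h0, Fin.succ_ne_zero]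
    · simp
  have hcard : #({i | i.succ ∈ fullPairs f} : Finset (Fin N)) = m := by
    rw [← heq, ← hmap, card_map, hmap]
  obtain ⟨x, hx, hx0⟩ := exists_eq_depth ({i | i.succ ∈ fullPairs f} : Finset (Fin N)) f
  rw [hD _ hcard] at hx0
  have hf0 : f (0, true) = 0 := by
    rcases mem_block.1 hx with rfl | ⟨i, hi, hxi⟩
    · exact hx0.symm
    · exact absurd hx0.symm (by
        obtain ⟨j, b⟩ := x
        dsimp only at hxi
        subst hxi
        exact mem_fullPairs.1 (mem_filter.1 hi).2 b)
  refine (card_le_card fun i hi => ?_).trans hf.2.2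
  rcases mem_insert.1 (hsub hi) with rfl | hi'
  · exact absurd (h _ (by simp) hf0) (mem_fullPairs.1 hi true)
  · exact hi'

/-- The index type of the top-dimensional cells. -/
abbrev Cell (N m : ℕ) : Type := {T : Finset (Fin N) // #T = m}

/-- The time parameter of the contraction, damped away from the star of the apex. -/
noncomputable def speed (m : ℕ) (s : ℝ) (f : Fin (N + 1) × Bool → ℝ) : ℝ :=
  s * max 0 (1 - (2 * N + 4) * ∑ T : Cell N m, depth T.1 f)

/-- The amount removed from the block of `T` at time `s`. -/
noncomputable def loss (m : ℕ) (s : ℝ) (f : Fin (N + 1) × Bool → ℝ) (T : Finset (Fin N)) : ℝ :=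
  min (speed m s f) ((1 - speed m s f) * depth T f)

/-- The unnormalized contraction of the star of the apex `(0, false)`, extended to all of
`crossReal N m`. -/
noncomputable def push (m : ℕ) (s : ℝ) (f : Fin (N + 1) × Bool → ℝ) : Fin (N + 1) × Bool → ℝ :=
  fun x => (1 - speed m s f) * f x - (∑ T : Cell N m, if x ∈ block T.1 then loss m s f T.1 else 0)
    + if x = (0, false) then speed m s f - ∑ T : Cell N m, loss m s f T.1 else 0

theorem continuous_speed :
    Continuous fun p : ℝ × (Fin (N + 1) × Bool → ℝ) => speed m p.1 p.2 := by
  have := fun T : Finset (Fin N) => continuous_depth T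
  unfold speed
  fun_prop

theorem continuous_loss (T : Finset (Fin N)) :
    Continuous fun p : ℝ × (Fin (N + 1) × Bool → ℝ) => loss m p.1 p.2 T := by
  have := continuous_depth T
  have := continuous_speed (N := N) (m := m)
  unfold loss
  fun_prop

theorem continuous_push :
    Continuous fun p : ℝ × (Fin (N + 1) × Bool → ℝ) => push m p.1 p.2 := by
  have := continuous_speed (N := N) (m := m)
  have := continuous_loss (N := N) (m := m)
  refine continuous_pi fun x => ?_
  unfold push
  refine Continuous.add (Continuous.sub (by fun_prop) (continuous_finsetSum _ fun T _ => ?_)) ?_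
  · split_ifs
    · exact this T.1
    · exact continuous_const
  · split_ifs
    · fun_prop
    · exact continuous_const

theorem speed_mem_Icc {f : Fin (N + 1) × Bool → ℝ} (hf : ∀ x, 0 ≤ f x) {s : ℝ}
    (hs : s ∈ Set.Icc (0 : ℝ) 1) : speed m s f ∈ Set.Icc (0 : ℝ) 1 := by
  have hsum : 0 ≤ ∑ T : Cell N m, depth T.1 f := sum_nonneg fun T _ => depth_nonneg hf T.1
  have hmax : max 0 (1 - (2 * N + 4) * ∑ T : Cell N m, depth T.1 f) ≤ 1 :=
    max_le zero_le_one (by nlinarith [mul_nonneg (by positivity : (0 : ℝ) ≤ 2 * N + 4) hsum])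
  exact ⟨mul_nonneg hs.1 (le_max_left _ _),
    mul_le_one₀ hs.2 (le_max_left _ _) hmax⟩

theorem loss_eq_zero {f : Fin (N + 1) × Bool → ℝ} (hf : ∀ x, 0 ≤ f x) {s : ℝ}
    (hs : s ∈ Set.Icc (0 : ℝ) 1) {T : Finset (Fin N)} (hT : depth T f = 0) :
    loss m s f T = 0 := by
  simp [loss, hT, (speed_mem_Icc hf hs).1]

theorem push_zero {f : Fin (N + 1) × Bool → ℝ} (hf : ∀ x, 0 ≤ f x) : push m 0 f = f := by
  have h : ∀ T, loss m 0 f T = 0 := fun T => by simp [loss, speed, depth_nonneg hf T]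
  ext x
  simp [push, h, speed]

theorem push_of_depth_eq_zero {f : Fin (N + 1) × Bool → ℝ} (hf : ∀ x, 0 ≤ f x) {s : ℝ}
    (hs : s ∈ Set.Icc (0 : ℝ) 1) (hD : ∀ T : Cell N m, depth T.1 f = 0) (x : Fin (N + 1) × Bool) :
    push m s f x = (1 - s) * f x + if x = (0, false) then s else 0 := by
  have hspeed : speed m s f = s := by simp [speed, hD]
  simp [push, hspeed, fun T : Cell N m => loss_eq_zero (m := m) hf hs (hD T)]

theorem push_of_depth_pos {f : Fin (N + 1) × Bool → ℝ} (hf : f ∈ crossReal N m) {s : ℝ}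
    (hs : s ∈ Set.Icc (0 : ℝ) 1) {T : Finset (Fin N)} (hT : #T = m) (hpos : 0 < depth T f)
    (x : Fin (N + 1) × Bool) :
    push m s f x = (1 - speed m s f) * f x - (if x ∈ block T then loss m s f T else 0)
      + if x = (0, false) then speed m s f - loss m s f T else 0 := by
  have hother : ∀ T' : Cell N m, T' ≠ ⟨T, hT⟩ → loss m s f T'.1 = 0 := fun T' hne =>
    loss_eq_zero hf.1 hs (le_antisymm (not_lt.1 fun hlt =>
      hne (Subtype.ext (eq_of_depth_pos hf T'.2 hT hlt hpos))) (depth_nonneg hf.1 _))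
  rw [push, Fintype.sum_eq_single (⟨T, hT⟩ : Cell N m) fun T' hne => by simp [hother T' hne],
    Fintype.sum_eq_single (⟨T, hT⟩ : Cell N m) hother]

theorem speed_of_depth_pos {f : Fin (N + 1) × Bool → ℝ} (hf : f ∈ crossReal N m) (s : ℝ)
    {T : Finset (Fin N)} (hT : #T = m) (hpos : 0 < depth T f) :
    speed m s f = s * max 0 (1 - (2 * N + 4) * depth T f) := by
  rw [speed, Fintype.sum_eq_single (⟨T, hT⟩ : Cell N m) fun T' hne =>
    le_antisymm (not_lt.1 fun hlt =>
      hne (Subtype.ext (eq_of_depth_pos hf T'.2 hT hlt hpos))) (depth_nonneg hf.1 _)]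

theorem loss_mul_lt_one {f : Fin (N + 1) × Bool → ℝ} (hf : f ∈ crossReal N m) {s : ℝ}
    (hs : s ∈ Set.Icc (0 : ℝ) 1) {T : Finset (Fin N)} (hT : #T = m) (hpos : 0 < depth T f) :
    (2 * N + 4) * loss m s f T < 1 := by
  obtain ⟨hu₀, hu₁⟩ := speed_mem_Icc (m := m) hf.1 hs
  have hN : (0 : ℝ) < 2 * N + 4 := by positivity
  rcases lt_or_ge ((2 * N + 4) * depth T f) 1 with hlt | hge
  · have hle : loss m s f T ≤ depth T f :=
      (min_le_right _ _).trans (mul_le_of_le_one_left hpos.le (by linarith))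
    exact (mul_le_mul_of_nonneg_left hle hN.le).trans_lt hlt
  · have hspeed : speed m s f = 0 := by
      rw [speed_of_depth_pos hf s hT hpos, max_eq_left (by linarith), mul_zero]
    have hle : loss m s f T ≤ 0 := (min_le_left _ _).trans hspeed.le
    nlinarith

theorem push_spec {f : Fin (N + 1) × Bool → ℝ} (hf : f ∈ crossReal N m) {s : ℝ}
    (hs : s ∈ Set.Icc (0 : ℝ) 1) :
    (∀ x, 0 ≤ push m s f x) ∧ 0 < ∑ x, push m s f x ∧ #(fullPairs (push m s f)) ≤ m := by
  by_cases hD : ∀ T : Cell N m, depth T.1 f = 0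
  · have hpush := push_of_depth_eq_zero hf.1 hs hD
    refine ⟨fun x => ?_, ?_, ?_⟩
    · rw [hpush]
      have := mul_nonneg (sub_nonneg.2 hs.2) (hf.1 x)
      have := hs.1
      split_ifs <;> linarith
    · simp only [hpush, sum_add_distrib, ← mul_sum, hf.2.1, sum_ite_eq', mem_univ, if_true]
      linarith
    · refine card_fullPairs_le_of_depth_eq_zero hf (fun T hT => hD ⟨T, hT⟩) fun x hx hfx => ?_
      simp [hpush, hx, hfx]
  · push Not at hD
    obtain ⟨⟨T, hT⟩, hne⟩ := hD
    have hpos : 0 < depth T f := lt_of_le_of_ne (depth_nonneg hf.1 T) (Ne.symm hne)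
    have hpush := push_of_depth_pos hf hs hT hpos
    obtain ⟨hu₀, hu₁⟩ := speed_mem_Icc (m := m) hf.1 hs
    have hz₀ : 0 ≤ loss m s f T :=
      le_min hu₀ (mul_nonneg (sub_nonneg.2 hu₁) hpos.le)
    have hz₁ : loss m s f T ≤ speed m s f := min_le_left _ _
    have hz₂ : loss m s f T ≤ (1 - speed m s f) * depth T f := min_le_right _ _
    refine ⟨fun x => ?_, ?_, ?_⟩
    · rw [hpush]
      have h₁ := mul_nonneg (sub_nonneg.2 hu₁) (hf.1 x)
      have h₂ : 0 ≤ (1 - speed m s f) * f x - if x ∈ block T then loss m s f T else 0 := by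
        split_ifs with hx
        · have := mul_le_mul_of_nonneg_left (depth_le (f := f) hx) (sub_nonneg.2 hu₁)
          linarith
        · linarith
      have h₃ : 0 ≤ if x = (0, false) then speed m s f - loss m s f T else 0 := by
        split_ifs <;> linarith
      linarith
    · have hcard : (#(block T) : ℝ) ≤ 2 * N + 2 := by
        have := card_le_univ (block T)
        simp only [Fintype.card_prod, Fintype.card_fin, Fintype.card_bool] at this
        have : (#(block T) : ℝ) ≤ ((N + 1) * 2 : ℕ) := by exact_mod_cast this
        push_cast at this
        linarith
      have hlt := loss_mul_lt_one hf hs hT hpos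
      have hmul := mul_le_mul_of_nonneg_right hcard hz₀
      simp only [hpush, sum_add_distrib, sum_sub_distrib, ← mul_sum, hf.2.1, sum_ite_eq',
        mem_univ, if_true, sum_ite_mem, univ_inter, sum_const, nsmul_eq_mul]
      linarith
    · rcases min_choice (speed m s f) ((1 - speed m s f) * depth T f) with hz | hz
      · have hz : loss m s f T = speed m s f := hz
        refine (card_le_card (fullPairs_subset fun x hx => ?_)).trans hf.2.2
        have hxT : x ∉ block T := fun hxT => by
          have := depth_le (f := f) hxT
          linarith
        simp [hpush, hx, hxT, hz]
      · have hz : loss m s f T = (1 - speed m s f) * depth T f := hz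
        obtain ⟨⟨j, b⟩, hx, hxd⟩ := exists_eq_depth T f
        have hj : j ∉ fullPairs (push m s f) := fun hj => by
          refine mem_fullPairs.1 hj b ?_
          rw [hpush, if_pos hx, if_neg (ne_of_mem_of_not_mem hx (apex_notMem_block T)), hz, hxd]
          ring
        have hj' : j ∈ insert 0 (fullPairs f) := by
          rw [fullPairs_eq_of_depth_pos hf hT hpos]
          rcases mem_block.1 hx with h | ⟨i, hi, h⟩
          · exact mem_insert.2 (Or.inl (congrArg Prod.fst h))
          · exact mem_insert_of_mem (mem_map.2 ⟨i, hi, h.symm⟩)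
        have hsub : fullPairs (push m s f) ⊆ (insert 0 (fullPairs f)).erase j := by
          refine subset_erase.2 ⟨fullPairs_subset_insert fun x hx hfx => ?_, hj⟩
          have hxT : x ∉ block T := fun hxT => by
            have := depth_le (f := f) hxT
            linarith
          simp [hpush, hx, hxT, hfx]
        have h₁ := card_le_card hsub
        have h₂ := card_insert_le 0 (fullPairs f)
        have h₃ := hf.2.2
        rw [card_erase_of_mem hj'] at h₁
        omega

theorem continuous_push_crossReal :
    Continuous fun p : unitInterval × crossReal N m => push m p.1.1 p.2.1 := by
  have hval : Continuous fun p : unitInterval × crossReal N m => (p.1.1, p.2.1) := by fun_prop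
  exact (continuous_push (N := N) (m := m)).comp hval

/-- The contraction of the star of the apex, as a homotopy of the whole space. -/
noncomputable def contraction (N m : ℕ) : C(unitInterval × crossReal N m, crossReal N m) where
  toFun p := ⟨unitMass (push m p.1.1 p.2.1), by
    have h := push_spec p.2.2 p.1.2
    exact unitMass_mem_crossReal h.1 h.2.1 h.2.2⟩
  continuous_toFun := Continuous.subtype_mk (continuous_unitMass_comp continuous_push_crossReal
    fun p => (push_spec p.2.2 p.1.2).2.1.ne') _

theorem contraction_zero (f : crossReal N m) : contraction N m (0, f) = f := by
  refine Subtype.ext ?_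
  change unitMass (push m ((0 : unitInterval) : ℝ) f.1) = f.1
  rw [Set.Icc.coe_zero, push_zero f.2.1, unitMass_of_sum_eq_one f.2.2.1]

theorem contraction_of_depth_eq_zero (s : unitInterval) (f : crossReal N m)
    (hD : ∀ T : Cell N m, depth T.1 f.1 = 0) (x : Fin (N + 1) × Bool) :
    (contraction N m (s, f)).1 x = (1 - s) * f.1 x + if x = (0, false) then (s : ℝ) else 0 := by
  change unitMass (push m s f.1) x = _
  have hpush := push_of_depth_eq_zero f.2.1 s.2 hD
  rw [unitMass_of_sum_eq_one, hpush]
  simp only [hpush, sum_add_distrib, ← mul_sum, f.2.2.1, sum_ite_eq', mem_univ, if_true]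
  ring

theorem depth_contraction (s : unitInterval) (f : crossReal N m)
    (hD : ∀ T : Cell N m, depth T.1 f.1 = 0) (T : Cell N m) :
    depth T.1 (contraction N m (s, f)).1 = 0 := by
  refine le_antisymm ?_ (depth_nonneg (contraction N m (s, f)).2.1 _)
  obtain ⟨x, hx, hxd⟩ := exists_eq_depth T.1 f.1
  refine (depth_le hx).trans_eq ?_
  rw [contraction_of_depth_eq_zero s f hD, ← hxd, hD,
    if_neg (ne_of_mem_of_not_mem hx (apex_notMem_block T.1))]
  ring

/-- The coordinate space of the cell of `T`. -/
abbrev CellCoord (T : Finset (Fin N)) : Type := (T × Bool → ℝ) × ({i // i ∉ T} → ℝ)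

theorem finrank_cellCoord (T : Finset (Fin N)) : Module.finrank ℝ (CellCoord T) = N + #T := by
  have := card_le_univ T
  have hcard : Fintype.card {i // i ∉ T} = N - #T := by
    rw [Fintype.card_subtype_compl]
    simp
  simp only [Fintype.card_fin] at this
  simp only [Module.finrank_prod, Module.finrank_fintype_fun_eq_card, Fintype.card_prod,
    Fintype.card_coe, Fintype.card_bool, hcard]
  omega

/-- The coordinates of a point of the cell of `T`. -/
noncomputable def cellChart (T : Finset (Fin N)) (f : Fin (N + 1) × Bool → ℝ) : CellCoord T :=
  (fun p => Real.log (f (p.1.1.succ, p.2) / f (0, true)),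
    fun i => (f (i.1.succ, true) - f (i.1.succ, false)) / f (0, true))

/-- The point with given coordinates, scaled to have value one at `(0, true)`. -/
noncomputable def cellPoint (T : Finset (Fin N)) (c : CellCoord T) (x : Fin (N + 1) × Bool) : ℝ :=
  Fin.cases (motive := fun _ => ℝ) (if x.2 then 1 else 0)
    (fun i => if h : i ∈ T then Real.exp (c.1 (⟨i, h⟩, x.2))
      else max 0 (if x.2 then c.2 ⟨i, h⟩ else -c.2 ⟨i, h⟩)) x.1

theorem cellPoint_zero (T : Finset (Fin N)) (c : CellCoord T) (b : Bool) :
    cellPoint T c (0, b) = if b then 1 else 0 := rfl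

theorem cellPoint_succ_mem {T : Finset (Fin N)} (c : CellCoord T) {i : Fin N} (h : i ∈ T)
    (b : Bool) : cellPoint T c (i.succ, b) = Real.exp (c.1 (⟨i, h⟩, b)) := by
  simp [cellPoint, h]

theorem cellPoint_succ_notMem {T : Finset (Fin N)} (c : CellCoord T) {i : Fin N} (h : i ∉ T)
    (b : Bool) :
    cellPoint T c (i.succ, b) = max 0 (if b then c.2 ⟨i, h⟩ else -c.2 ⟨i, h⟩) := by
  simp [cellPoint, h]

theorem continuous_cellPoint (T : Finset (Fin N)) : Continuous (cellPoint T) := by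
  refine continuous_pi ?_
  rintro ⟨j, b⟩
  refine Fin.cases ?_ (fun i => ?_) j
  · simp only [cellPoint_zero]
    exact continuous_const
  · by_cases h : i ∈ T
    · simp only [cellPoint_succ_mem _ h]
      fun_prop
    · simp only [cellPoint_succ_notMem _ h]
      cases b
      · simp only [Bool.false_eq_true, if_false]
        fun_prop
      · simp only [if_true]
        fun_prop

theorem cellPoint_nonneg (T : Finset (Fin N)) (c : CellCoord T) (x : Fin (N + 1) × Bool) :
    0 ≤ cellPoint T c x := by
  obtain ⟨j, b⟩ := x
  refine Fin.cases ?_ (fun i => ?_) j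
  · rw [cellPoint_zero]
    split_ifs <;> norm_num
  · by_cases h : i ∈ T
    · rw [cellPoint_succ_mem _ h]
      positivity
    · rw [cellPoint_succ_notMem _ h]
      exact le_max_left _ _

theorem sum_cellPoint_pos (T : Finset (Fin N)) (c : CellCoord T) : 0 < ∑ x, cellPoint T c x :=
  sum_pos' (fun x _ => cellPoint_nonneg T c x) ⟨(0, true), mem_univ _, by simp [cellPoint_zero]⟩

theorem unitMass_cellPoint_mem {T : Finset (Fin N)} (hT : #T = m) (c : CellCoord T) :
    unitMass (cellPoint T c) ∈ crossReal N m := by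
  refine unitMass_mem_crossReal (cellPoint_nonneg T c) (sum_cellPoint_pos T c) ?_
  rw [← hT, ← card_map (Fin.succEmb N)]
  refine card_le_card fun j => Fin.cases (fun h0 => ?_) (fun i hi => ?_) j
  · exact absurd (cellPoint_zero T c false) (mem_fullPairs.1 h0 false)
  · refine mem_map.2 ⟨i, ?_, rfl⟩
    by_contra h
    have h₁ := mem_fullPairs.1 hi true
    have h₂ := mem_fullPairs.1 hi false
    rw [cellPoint_succ_notMem _ h] at h₁ h₂
    rcases le_total (c.2 ⟨i, h⟩) 0 with hc | hc
    · exact h₁ (by simpa using hc)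
    · exact h₂ (by simpa using hc)

theorem depth_unitMass_cellPoint_pos (T : Finset (Fin N)) (c : CellCoord T) :
    0 < depth T (unitMass (cellPoint T c)) := by
  have hsum := sum_cellPoint_pos T c
  refine depth_pos_iff.2 ⟨div_pos (by simp [cellPoint_zero]) hsum, fun i hi b => div_pos ?_ hsum⟩
  rw [cellPoint_succ_mem _ hi]
  positivity

theorem cellPoint_cellChart {f : Fin (N + 1) × Bool → ℝ} (hf : f ∈ crossReal N m)
    {T : Finset (Fin N)} (hT : #T = m) (hpos : 0 < depth T f) (x : Fin (N + 1) × Bool) :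
    cellPoint T (cellChart T f) x = f x / f (0, true) := by
  obtain ⟨h₀, hpT⟩ := depth_pos_iff.1 hpos
  obtain ⟨j, b⟩ := x
  refine Fin.cases ?_ (fun i => ?_) j
  · rw [cellPoint_zero]
    cases b
    · simp [apply_apex_eq_zero hf hT hpos]
    · simp [h₀.ne']
  · by_cases h : i ∈ T
    · rw [cellPoint_succ_mem _ h]
      exact Real.exp_log (div_pos (hpT i h b) h₀)
    · rw [cellPoint_succ_notMem _ h]
      have hi : i.succ ∉ fullPairs f := by
        rw [fullPairs_eq_of_depth_pos hf hT hpos]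
        simpa using h
      have ht := div_nonneg (hf.1 (i.succ, true)) h₀.le
      have hff := div_nonneg (hf.1 (i.succ, false)) h₀.le
      have hor : f (i.succ, true) = 0 ∨ f (i.succ, false) = 0 := by
        by_contra! hne
        exact hi (by simpa [fullPairs] using hne)
      rcases hor with h' | h' <;> cases b <;> simp [cellChart, h', sub_div, ht, hff]

theorem cellChart_unitMass_cellPoint (T : Finset (Fin N)) (c : CellCoord T) :
    cellChart T (unitMass (cellPoint T c)) = c := by
  have hsum := (sum_cellPoint_pos T c).ne'
  have h₀ : unitMass (cellPoint T c) (0, true) = 1 / ∑ x, cellPoint T c x := by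
    simp [unitMass, cellPoint_zero]
  refine Prod.ext (funext fun p => ?_) (funext fun i => ?_)
  · simp only [cellChart, h₀]
    rw [unitMass, cellPoint_succ_mem _ p.1.2, div_div_div_cancel_right₀ hsum, div_one,
      Real.log_exp]
  · simp only [cellChart, h₀]
    simp only [unitMass]
    rw [cellPoint_succ_notMem _ i.2, cellPoint_succ_notMem _ i.2, ← sub_div,
      div_div_div_cancel_right₀ hsum, div_one]
    rcases le_total (c.2 i) 0 with hc | hc <;> simp [hc]

/-- The open cell of `T` is homeomorphic to its coordinate space. -/
noncomputable def cellHomeomorph (T : Finset (Fin N)) (hT : #T = m) :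
    {f : crossReal N m | 0 < depth T f.1} ≃ₜ CellCoord T where
  toFun f := cellChart T f.1.1
  invFun c := ⟨⟨unitMass (cellPoint T c), unitMass_cellPoint_mem hT c⟩,
    depth_unitMass_cellPoint_pos T c⟩
  left_inv f := by
    refine Subtype.ext (Subtype.ext (funext fun x => ?_))
    have h₀ := (depth_pos_iff.1 f.2).1.ne'
    simp only [unitMass, cellPoint_cellChart f.1.2 hT f.2]
    rw [← sum_div, f.1.2.2.1, div_div_div_cancel_right₀ h₀, div_one]
  right_inv c := cellChart_unitMass_cellPoint T c
  continuous_toFun := by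
    have hx : ∀ x, Continuous fun f : {f : crossReal N m | 0 < depth T f.1} => f.1.1 x :=
      fun x =>
        (continuous_apply x).comp (continuous_subtype_val.comp continuous_subtype_val)
    have h₀ : ∀ f : {f : crossReal N m | 0 < depth T f.1}, f.1.1 (0, true) ≠ 0 :=
      fun f => (depth_pos_iff.1 f.2).1.ne'
    refine Continuous.prodMk (continuous_pi fun p => ?_) (continuous_pi fun i => ?_)
    · exact ((hx _).div (hx _) h₀).log fun f =>
        div_ne_zero ((depth_pos_iff.1 f.2).2 _ p.1.2 _).ne' (h₀ f)
    · exact ((hx _).sub (hx _)).div (hx _) h₀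
  continuous_invFun := Continuous.subtype_mk (Continuous.subtype_mk (continuous_unitMass_comp
    (continuous_cellPoint T) fun c => (sum_cellPoint_pos T c).ne') _) _

theorem nonempty_homotopyEquiv_crossReal {d M : ℕ} (hmN : m ≤ N) (hd : d = N + m + 1)
    (hM : M = N.choose m) (y₀ : sphereSpace d) :
    Nonempty (ContinuousMap.HomotopyEquiv (crossReal N m) (Wedge (Fin M) (sphereSpace d) y₀)) := by
  have : CompactSpace (crossReal N m) := isCompact_iff_compactSpace.1 (isCompact_crossReal N m)
  have : CompactSpace (sphereSpace d) :=
    isCompact_iff_compactSpace.1 (isCompact_sphere (0 : EuclideanSpace ℝ (Fin d)) 1)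
  have : Nonempty (Fin M) := Fin.pos_iff_nonempty.1 (hM ▸ Nat.choose_pos hmN)
  let e : Fin M ≃ Cell N m :=
    (Fintype.equivFinOfCardEq (by rw [Fintype.card_finset_len, Fintype.card_fin, hM])).symm
  have hφ : ∀ T : Cell N m, ∃ φ : crossReal N m → sphereSpace d, Continuous φ ∧
      (∀ f, φ f = y₀ ↔ depth T.1 f.1 = 0) ∧ (∀ f f', φ f = φ f' → φ f ≠ y₀ → f = f') ∧
      ∀ y, y ≠ y₀ → ∃ f, φ f = y := by
    intro T
    obtain ⟨h⟩ : Nonempty (CellCoord T.1 ≃ₜ ({y₀}ᶜ : Set (sphereSpace d))) :=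
      nonempty_homeomorph_sphere_compl y₀
        (by rw [finrank_cellCoord, T.2, finrank_euclideanSpace_fin, hd])
    have hU : IsOpen {f : crossReal N m | 0 < depth T.1 f.1} :=
      isOpen_lt continuous_const ((continuous_depth T.1).comp continuous_subtype_val)
    obtain ⟨φ, hc, hbase, hin⟩ :=
      exists_continuous_extension y₀ hU ((cellHomeomorph T.1 T.2).trans h)
    have hmem : ∀ f, φ f ≠ y₀ → 0 < depth T.1 f.1 := fun f hf => by
      by_contra hn
      exact hf ((hbase f).2 hn)
    refine ⟨φ, hc, fun f => (hbase f).trans ?_, fun f f' hff hne => ?_, fun y hy => ?_⟩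
    · exact not_lt.trans ⟨fun hle => le_antisymm hle (depth_nonneg f.2.1 _), fun h => h.le⟩
    · have h₁ := hin ⟨f, hmem f hne⟩
      have h₂ := hin ⟨f', hmem f' (hff ▸ hne)⟩
      dsimp only at h₁ h₂
      rw [h₁, h₂] at hff
      exact congrArg Subtype.val
        (((cellHomeomorph T.1 T.2).trans h).injective (Subtype.ext hff))
    · refine ⟨((cellHomeomorph T.1 T.2).trans h).symm ⟨y, hy⟩, ?_⟩
      rw [hin, Homeomorph.apply_symm_apply]
  choose φ hc hbase hinj hsurj using hφ
  have hD : ∀ f, (∀ i, φ (e i) f = y₀) → ∀ T : Cell N m, depth T.1 f.1 = 0 := fun f hf T =>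
    (hbase T f).1 (by simpa using hf (e.symm T))
  have hpos : ∀ i f, φ (e i) f ≠ y₀ → 0 < depth (e i).1 f.1 := fun i f hf =>
    lt_of_le_of_ne (depth_nonneg f.2.1 _) fun h => hf ((hbase _ f).2 h.symm)
  let v : crossReal N m := ⟨Pi.single (0, false) 1, by
    refine ⟨fun x => ?_, by simp, ?_⟩
    · rw [Pi.single_apply]
      split_ifs <;> norm_num
    · rw [card_eq_zero.2 (eq_empty_of_forall_notMem fun i hi => ?_)]
      · exact Nat.zero_le m
      · exact mem_fullPairs.1 hi true (by simp)⟩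
  refine nonempty_homotopyEquiv_wedge y₀ (fun i => φ (e i)) (fun i => hc (e i)) ?_
    (fun i => hinj (e i)) (fun i => hsurj (e i)) (contraction N m) contraction_zero ?_ v ?_ ?_
  · intro f i j hi hj
    exact e.injective (Subtype.ext
      (eq_of_depth_pos f.2 (e i).2 (e j).2 (hpos i f hi) (hpos j f hj)))
  · intro s f hf i
    exact (hbase _ _).2 (depth_contraction s f (hD f hf) _)
  · intro i
    refine (hbase _ _).2 (le_antisymm ?_ (depth_nonneg v.2.1 _))
    exact (depth_le (mem_block.2 (Or.inl rfl))).trans_eq (by simp [v])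
  · intro f hf
    refine Subtype.ext (funext fun x => ?_)
    rw [contraction_of_depth_eq_zero 1 f (hD f hf)]
    simp [v, Pi.single_apply]

end CrossPolytope

/-- For `0 ≤ k ≤ n-1`, `Θ(CrossPoly(n,k))` is homotopy
equivalent to a wedge of `C(n-1, k)` copies of the sphere `S^{2n-k-2}`
(the unit sphere in `ℝ^{2n-k-1}`). -/
theorem theta_cross_polytope (n k : ℕ) (hn : 1 ≤ n) (hk : k ≤ n - 1) :
    Nonempty (ContinuousMap.HomotopyEquiv
      (↥(geomReal (thetaComplex (crossEdges n k))))
      (Wedge (Fin ((n - 1).choose k)) (↥(sphereSpace (2 * n - k - 1)))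
        (spherePt _ (by omega)))) := by
  obtain ⟨N, rfl⟩ : ∃ N, n = N + 1 := ⟨n - 1, by omega⟩
  rw [Nat.add_sub_cancel] at hk
  rw [geomReal_thetaComplex_crossEdges (m := N - k) (by omega)]
  exact nonempty_homotopyEquiv_crossReal (by omega) (by omega)
    (by rw [Nat.add_sub_cancel, Nat.choose_symm hk]) _
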